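/- arXiv:2306.04792 — 2 statements merged into one kernel-verified Lean document; each statement's English description precedes it below -/
import Mathlib

section
/- In the randomized controlled trial model with responses, for every attribute a : N → {0,1} with 0 < |a| < n and every position k ∈ {1,…,s}, the effect of the attribute satisfies: Pr(R_k = 1 | A_k = 1) − Pr(R_k = 1 | A_k = 0) = (t/s)·[(1/|a|)·Σ_{i : a(i)=1} τ_i − (1/(n−|a|))·Σ_{i : a(i)=0} τ_i] + (1 − t/s)·[(1/|a|)·Σ_{i : a(i)=1} ν_i − (1/(n−|a|))·Σ_{i : a(i)=0} ν_i], where A_k = a(i_k) and |a| = #{i : a(i)=1}. -/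
/- Randomized controlled trial model with responses:
   a uniformly random injective s-tuple of individuals from `Fin n`
   (encoded as `Fin s ↪ Fin n`), an independent uniformly random t-element
   subset of positions `Fin s` (the treated positions), and, given these,
   independent Bernoulli responses at each position: position `k` responds
   with probability `τ (i_k)` if treated and `ν (i_k)` if untreated. -/

open Finset BigOperators
open scoped Classical

namespace RCT

/-- Probability weight of a sample point `(σ, T, R)`. -/
noncomputable def w (n s t : ℕ) (τ ν : Fin n → ℝ)
    (ω : (Fin s ↪ Fin n) × Finset (Fin s) × (Fin s → Bool)) : ℝ :=
  ((Fintype.card (Fin s ↪ Fin n) : ℝ))⁻¹ *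
    (if ω.2.1.card = t then ((s.choose t : ℝ))⁻¹ else 0) *
    ∏ k : Fin s,
      (if ω.2.2 k = true
        then (if k ∈ ω.2.1 then τ (ω.1 k) else ν (ω.1 k))
        else 1 - (if k ∈ ω.2.1 then τ (ω.1 k) else ν (ω.1 k)))

/-- Probability of an event. -/
noncomputable def Pr (n s t : ℕ) (τ ν : Fin n → ℝ)
    (E : (Fin s ↪ Fin n) × Finset (Fin s) × (Fin s → Bool) → Prop) : ℝ :=
  ∑ ω : (Fin s ↪ Fin n) × Finset (Fin s) × (Fin s → Bool),
    if E ω then w n s t τ ν ω else 0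

/-- Conditional probability `Pr (E | F)`. -/
noncomputable def cPr (n s t : ℕ) (τ ν : Fin n → ℝ)
    (E F : (Fin s ↪ Fin n) × Finset (Fin s) × (Fin s → Bool) → Prop) : ℝ :=
  Pr n s t τ ν (fun ω => E ω ∧ F ω) / Pr n s t τ ν F

/-- Expectation of a real-valued random variable. -/
noncomputable def Ex (n s t : ℕ) (τ ν : Fin n → ℝ)
    (f : (Fin s ↪ Fin n) × Finset (Fin s) × (Fin s → Bool) → ℝ) : ℝ :=
  ∑ ω : (Fin s ↪ Fin n) × Finset (Fin s) × (Fin s → Bool), w n s t τ ν ω * f ω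

/-!
Expectation in the trial is an average over samples, then over treatment sets, of a product
Bernoulli sum. Seen from a single position `k`, each layer collapses: only the `k`-th factor of
the product survives, `k` is treated in a fraction `t / s` of the treatment sets, and `i_k` is
uniform because permuting individuals permutes the fibres of `σ ↦ σ k`. Hence, given `i_k = i`,
the response has probability `(t / s) τ i + (1 - t / s) ν i`, and conditioning on an attribute
averages this over the individuals that have it.
-/

theorem card_filter_eq_zero_eq_sub {α R : Type*} [Fintype α] [AddGroupWithOne R]
    (a : α → Fin 2) : (#{i | a i = 0} : R) = Fintype.card α - #{i | a i = 1} := by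
  have zero_iff (i : α) : a i = 0 ↔ ¬ a i = 1 := by lia
  simp only [zero_iff]
  rw [eq_sub_iff_add_eq, ← card_univ, ← Nat.cast_add, add_comm, card_filter_add_card_filter_not]

theorem expect_comp_of_card_fiber_eq {K X α : Type*} [Semifield K] [CharZero K]
    [Fintype X] [Nonempty X] [Fintype α] [DecidableEq α] (g : X → α)
    (hg : ∀ i j, #{x | g x = i} = #{x | g x = j}) (f : α → K) :
    𝔼 x, f (g x) = 𝔼 i, f i := by
  obtain ⟨x₀⟩ := ‹Nonempty X›
  set c := #{x | g x = g x₀} with hc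
  have c_ne_zero : (c : K) ≠ 0 :=
    Nat.cast_ne_zero.mpr (card_ne_zero_of_mem (mem_filter.mpr ⟨mem_univ x₀, rfl⟩))
  have sum_comp (f : α → K) : ∑ x, f (g x) = c * ∑ i, f i := by
    simp_rw [← sum_fiberwise' univ g f, sum_const, hg _ (g x₀), nsmul_eq_mul, mul_sum, hc]
  have card_eq : (Fintype.card X : K) = c * Fintype.card α := by simpa using sum_comp 1
  rw [Fintype.expect_eq_sum_div_card, Fintype.expect_eq_sum_div_card, sum_comp, card_eq,
    mul_div_mul_left _ _ c_ne_zero]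

theorem card_embedding_apply_eq {ι α : Type*} [Fintype (ι ↪ α)] [DecidableEq α]
    (k : ι) (i j : α) : #{σ : ι ↪ α | σ k = i} = #{σ : ι ↪ α | σ k = j} :=
  card_equiv (Equiv.embeddingCongr (Equiv.refl ι) (Equiv.swap i j)) fun σ => by
    simp [Equiv.embeddingCongr, Equiv.swap_apply_eq_iff]

theorem expect_embedding_apply {K ι α : Type*} [Semifield K] [CharZero K]
    [Fintype (ι ↪ α)] [Nonempty (ι ↪ α)] [Fintype α] (k : ι) (f : α → K) :
    𝔼 σ : ι ↪ α, f (σ k) = 𝔼 i, f i :=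
  expect_comp_of_card_fiber_eq (fun σ : ι ↪ α => σ k) (card_embedding_apply_eq k) f

theorem card_filter_notMem_powersetCard_mul_card {ι : Type*} [DecidableEq ι] {S : Finset ι}
    {k : ι} (hk : k ∈ S) (t : ℕ) :
    #{T ∈ powersetCard t S | k ∉ T} * #S = (#S).choose t * (#S - t) := by
  have filter_eq : {T ∈ powersetCard t S | k ∉ T} = powersetCard t (S.erase k) := by
    ext T
    simp only [mem_filter, mem_powersetCard, subset_erase]
    tauto
  rw [filter_eq, card_powersetCard, ← card_erase_add_one hk, Nat.choose_mul_succ_eq]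

theorem expect_powersetCard_ite_mem {K ι : Type*} [Field K] [CharZero K] [DecidableEq ι]
    {S : Finset ι} {t : ℕ} (ht : t ≤ #S) {k : ι} (hk : k ∈ S) (x y : K) :
    𝔼 T ∈ powersetCard t S, (if k ∈ T then x else y) =
      t / #S * x + (1 - t / #S) * y := by
  have choose_ne_zero : ((#S).choose t : K) ≠ 0 := Nat.cast_ne_zero.mpr (Nat.choose_pos ht).ne'
  have card_ne_zero : (#S : K) ≠ 0 := Nat.cast_ne_zero.mpr (card_ne_zero_of_mem hk)
  have card_notMem : (#{T ∈ powersetCard t S | k ∉ T} : K) =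
      (#S).choose t * (#S - t) / #S := by
    rw [eq_div_iff card_ne_zero, ← Nat.cast_sub ht]
    exact_mod_cast card_filter_notMem_powersetCard_mul_card hk t
  have card_mem : (#{T ∈ powersetCard t S | k ∈ T} : K) =
      (#S).choose t - #{T ∈ powersetCard t S | k ∉ T} := by
    rw [eq_sub_iff_add_eq, ← card_powersetCard]
    exact_mod_cast card_filter_add_card_filter_not (s := powersetCard t S) (k ∈ ·)
  rw [expect_eq_sum_div_card, sum_ite, sum_const, sum_const, nsmul_eq_mul, nsmul_eq_mul,
    card_mem, card_notMem, card_powersetCard]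
  field_simp
  ring

section ProductWeights

variable {ι R : Type*} [Fintype ι] [DecidableEq ι]

theorem sum_prod_mul_apply {β : Type*} [Fintype β] [CommSemiring R] (p : ι → β → R)
    (k : ι) (hp : ∀ j ≠ k, ∑ b, p j b = 1) (f : β → R) :
    ∑ x : ι → β, (∏ j, p j (x j)) * f (x k) = ∑ b, p k b * f b := by
  calc ∑ x : ι → β, (∏ j, p j (x j)) * f (x k)
      = ∑ x : ι → β, ∏ j, p j (x j) * (if j = k then f (x j) else 1) := by
        simp_rw [prod_mul_distrib, prod_ite_eq', mem_univ, if_true]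
    _ = ∏ j, ∑ b, p j b * (if j = k then f b else 1) := by
        rw [prod_univ_sum, Fintype.piFinset_univ]
    _ = ∑ b, p k b * f b := by
        rw [Fintype.prod_eq_single k fun j hj => by simp [hj, hp j hj]]
        simp

theorem sum_prod_bernoulli_mul_apply [CommRing R] (p : ι → R) (k : ι) (f : Bool → R) :
    ∑ x : ι → Bool, (∏ j, if x j = true then p j else 1 - p j) * f (x k) =
      p k * f true + (1 - p k) * f false := by
  rw [sum_prod_mul_apply (fun j b => if b = true then p j else 1 - p j) k (by simp)]
  simp

end ProductWeights

section Trial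

variable {n s t : ℕ} (τ ν : Fin n → ℝ)

/-- The probability that individual `i` responds when placed at a fixed position of the trial:
that position is treated with probability `t / s`. -/
noncomputable def responseRate (s t : ℕ) (τ ν : Fin n → ℝ) (i : Fin n) : ℝ :=
  t / s * τ i + (1 - t / s) * ν i

theorem expect_responseRate (S : Finset (Fin n)) :
    𝔼 i ∈ S, responseRate s t τ ν i =
      t / s * (𝔼 i ∈ S, τ i) + (1 - t / s) * (𝔼 i ∈ S, ν i) := by
  simp only [responseRate, expect_add_distrib, mul_expect]

theorem Pr_eq_Ex (E : (Fin s ↪ Fin n) × Finset (Fin s) × (Fin s → Bool) → Prop)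
    [DecidablePred E] :
    Pr n s t τ ν E = Ex n s t τ ν fun ω => if E ω then 1 else 0 := by
  simp only [Pr, Ex, mul_ite, mul_one, mul_zero]
  congr!

theorem Ex_eq_expect_expect_sum
    (f : (Fin s ↪ Fin n) × Finset (Fin s) × (Fin s → Bool) → ℝ) :
    Ex n s t τ ν f = 𝔼 σ : Fin s ↪ Fin n, 𝔼 T ∈ powersetCard t univ, ∑ R : Fin s → Bool,
      (∏ j, if R j = true then (if j ∈ T then τ (σ j) else ν (σ j))
        else 1 - (if j ∈ T then τ (σ j) else ν (σ j))) * f (σ, T, R) := by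
  simp only [Ex, w, Fintype.sum_prod_type, expect_eq_sum_div_card, card_powersetCard, card_univ,
    Fintype.card_fin]
  simp only [powersetCard_eq_filter, powerset_univ, sum_filter, sum_div]
  refine sum_congr rfl fun σ _ => sum_congr rfl fun T _ => ?_
  split_ifs
  · simp only [div_eq_inv_mul, mul_sum, mul_assoc]
  · simp

theorem Ex_individual_response (hts : t ≤ s) (hsn : s ≤ n) (k : Fin s)
    (f : Fin n → Bool → ℝ) :
    Ex n s t τ ν (fun ω => f (ω.1 k) (ω.2.2 k)) =
      𝔼 i, (responseRate s t τ ν i * f i true + (1 - responseRate s t τ ν i) * f i false) := by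
  have : Nonempty (Fin s ↪ Fin n) := ⟨Fin.castLEEmb hsn⟩
  have average_treatment (x y : ℝ) :
      𝔼 T ∈ powersetCard t (univ : Finset (Fin s)), (if k ∈ T then x else y) =
        t / s * x + (1 - t / s) * y := by
    simpa using expect_powersetCard_ite_mem (by simpa using hts) (mem_univ k) x y
  rw [Ex_eq_expect_expect_sum, ← expect_embedding_apply (α := Fin n) k]
  refine expect_congr rfl fun σ _ => ?_
  calc 𝔼 T ∈ powersetCard t univ, ∑ R : Fin s → Bool,
        (∏ j, if R j = true then (if j ∈ T then τ (σ j) else ν (σ j))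
          else 1 - (if j ∈ T then τ (σ j) else ν (σ j))) * f (σ k) (R k)
      = 𝔼 T ∈ powersetCard t univ,
          (if k ∈ T then τ (σ k) * f (σ k) true + (1 - τ (σ k)) * f (σ k) false
            else ν (σ k) * f (σ k) true + (1 - ν (σ k)) * f (σ k) false) := by
        refine expect_congr rfl fun T _ => ?_
        rw [sum_prod_bernoulli_mul_apply (fun j => if j ∈ T then τ (σ j) else ν (σ j))]
        split_ifs <;> rfl
    _ = responseRate s t τ ν (σ k) * f (σ k) true +
          (1 - responseRate s t τ ν (σ k)) * f (σ k) false := by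
        rw [average_treatment, responseRate]
        ring

variable (p : Fin n → Prop) [DecidablePred p]

theorem Pr_individual (hts : t ≤ s) (hsn : s ≤ n) (k : Fin s) :
    Pr n s t τ ν (fun ω => p (ω.1 k)) = (#{i | p i} : ℝ) / n := by
  rw [Pr_eq_Ex, Ex_individual_response τ ν hts hsn k fun i _ => if p i then 1 else 0,
    Fintype.expect_eq_sum_div_card, Fintype.card_fin]
  simp only [← add_mul, add_sub_cancel, one_mul, sum_boole]

theorem Pr_response_and_individual (hts : t ≤ s) (hsn : s ≤ n) (k : Fin s) :
    Pr n s t τ ν (fun ω => ω.2.2 k = true ∧ p (ω.1 k)) =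
      (∑ i with p i, responseRate s t τ ν i) / n := by
  rw [Pr_eq_Ex,
    Ex_individual_response τ ν hts hsn k fun i b => if b = true ∧ p i then 1 else 0,
    Fintype.expect_eq_sum_div_card, Fintype.card_fin]
  simp [sum_filter]

-- When no individual satisfies `p`, both sides are `0 / 0 = 0`.
theorem cPr_response_individual (hts : t ≤ s) (hsn : s ≤ n) (k : Fin s) :
    cPr n s t τ ν (fun ω => ω.2.2 k = true) (fun ω => p (ω.1 k)) =
      𝔼 i with p i, responseRate s t τ ν i := by
  have n_ne_zero : (n : ℝ) ≠ 0 := Nat.cast_ne_zero.mpr (k.pos.trans_le hsn).ne'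
  rw [cPr, Pr_response_and_individual τ ν p hts hsn, Pr_individual τ ν p hts hsn,
    div_div_div_cancel_right₀ n_ne_zero, expect_eq_sum_div_card]

end Trial

/-- Effect of an attribute:
`Pr(R_k = 1 | A_k = 1) − Pr(R_k = 1 | A_k = 0)
  = (t/s)·[(1/|a|)·Σ_{a i = 1} τ i − (1/(n−|a|))·Σ_{a i = 0} τ i]
    + (1 − t/s)·[(1/|a|)·Σ_{a i = 1} ν i − (1/(n−|a|))·Σ_{a i = 0} ν i]`. -/
theorem effect_of_attribute (n s t : ℕ) (ht : 0 < t) (hts : t < s) (hsn : s ≤ n)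
    (τ ν : Fin n → ℝ) (hτ : ∀ i, τ i ∈ Set.Icc (0 : ℝ) 1) (hν : ∀ i, ν i ∈ Set.Icc (0 : ℝ) 1)
    (a : Fin n → Fin 2) (ha0 : 0 < (univ.filter (fun i => a i = 1)).card)
    (han : (univ.filter (fun i => a i = 1)).card < n) (k : Fin s) :
    cPr n s t τ ν (fun ω => ω.2.2 k = true) (fun ω => a (ω.1 k) = 1) -
      cPr n s t τ ν (fun ω => ω.2.2 k = true) (fun ω => a (ω.1 k) = 0) =
      ((t : ℝ) / s) *
          ((1 / ((univ.filter (fun i => a i = 1)).card : ℝ)) *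
              (∑ i ∈ univ.filter (fun i => a i = 1), τ i) -
            (1 / ((n : ℝ) - ((univ.filter (fun i => a i = 1)).card : ℝ))) *
              (∑ i ∈ univ.filter (fun i => a i = 0), τ i)) +
        (1 - (t : ℝ) / s) *
          ((1 / ((univ.filter (fun i => a i = 1)).card : ℝ)) *
              (∑ i ∈ univ.filter (fun i => a i = 1), ν i) -
            (1 / ((n : ℝ) - ((univ.filter (fun i => a i = 1)).card : ℝ))) *
              (∑ i ∈ univ.filter (fun i => a i = 0), ν i)) := by
  rw [cPr_response_individual τ ν (a · = 1) hts.le hsn k,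
    cPr_response_individual τ ν (a · = 0) hts.le hsn k,
    expect_responseRate, expect_responseRate]
  simp only [expect_eq_sum_div_card, card_filter_eq_zero_eq_sub, Fintype.card_fin]
  ring

end RCT
end

section
/- In the randomized controlled trial model with responses, for every attribute a : N → {0,1} with |a| < n and every position k ∈ {1,…,s}, the conditional effect of treatment given A_k = 0 satisfies: Pr(R_k = 1 | (T_k = 1) ∩ (A_k = 0)) − Pr(R_k = 1 | (T_k = 0) ∩ (A_k = 0)) = (1/(n−|a|))·Σ_{i : a(i)=0} (τ_i − ν_i), where A_k = a(i_k) and |a| = #{i : a(i)=1}. -/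
/- Randomized controlled trial model with responses:
   a uniformly random injective s-tuple of individuals from `Fin n`
   (encoded as `Fin s ↪ Fin n`), an independent uniformly random t-element
   subset of positions `Fin s` (the treated positions), and, given these,
   independent Bernoulli responses at each position: position `k` responds
   with probability `τ (i_k)` if treated and `ν (i_k)` if untreated. -/

open Finset BigOperators
open scoped Classical

namespace RCT

/-!
Only the triple `(i_k, T, R_k)` matters: the responses at the other positions sum out, and `i_k` is
uniform on the population, since permuting the population preserves the uniform law on injective
tuples. Since moreover `T` is independent of `i_k`, both `Pr(R_k = 1, T_k = 1, A_k = 0)` and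
`Pr(T_k = 1, A_k = 0)` contain the factor `Pr(T_k = 1)`. It cancels in the conditional probability
and leaves the average of `τ` over `{i | a i = 0}`; in the same way the control arm leaves the
average of `ν`.
-/

section UniformAverages

variable {ι α M : Type*} [Fintype α] [AddCommMonoid M] [Module ℚ≥0 M]

theorem expect_perm_apply [DecidableEq α] (x : α) (g : α → M) :
    𝔼 π : Equiv.Perm α, g (π x) = 𝔼 y, g y := by
  have : Nonempty α := ⟨x⟩
  have apply_eq (y : α) : 𝔼 π : Equiv.Perm α, g (π x) = 𝔼 π : Equiv.Perm α, g (π y) :=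
    Fintype.expect_equiv (Equiv.mulRight (Equiv.swap x y)) _ _ fun π => by simp
  calc 𝔼 π : Equiv.Perm α, g (π x)
      = 𝔼 y, 𝔼 π : Equiv.Perm α, g (π y) := by
        rw [← expect_congr rfl fun y _ => apply_eq y, Fintype.expect_const]
    _ = 𝔼 π : Equiv.Perm α, 𝔼 y, g (π y) := expect_comm ..
    _ = 𝔼 _π : Equiv.Perm α, 𝔼 y, g y :=
        expect_congr rfl fun π _ => Fintype.expect_equiv π _ _ fun _ => rfl
    _ = 𝔼 y, g y := Fintype.expect_const _

theorem expect_embedding_apply_s13 [Fintype ι] [Nonempty (ι ↪ α)] (k : ι) (g : α → M) :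
    𝔼 σ : ι ↪ α, g (σ k) = 𝔼 y, g y := by
  have permute (π : Equiv.Perm α) : 𝔼 σ : ι ↪ α, g (σ k) = 𝔼 σ : ι ↪ α, g (π (σ k)) :=
    Fintype.expect_equiv (Equiv.embeddingCongr (Equiv.refl ι) π.symm) _ _ fun σ => by simp
  calc 𝔼 σ : ι ↪ α, g (σ k)
      = 𝔼 π : Equiv.Perm α, 𝔼 σ : ι ↪ α, g (π (σ k)) := by
        rw [← expect_congr rfl fun π _ => permute π, Fintype.expect_const]
    _ = 𝔼 σ : ι ↪ α, 𝔼 π : Equiv.Perm α, g (π (σ k)) := expect_comm ..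
    _ = 𝔼 _σ : ι ↪ α, 𝔼 y, g y := expect_congr rfl fun σ _ => expect_perm_apply (σ k) g
    _ = 𝔼 y, g y := Fintype.expect_const _

end UniformAverages

/-- If `p` holds nowhere, this reads `0 / 0 = 0`: an average over `∅` is `0`. -/
theorem expect_ite_div_expect_ite_one {α K : Type*} [Fintype α] [Semifield K] [CharZero K]
    (p : α → Prop) [DecidablePred p] (f : α → K) :
    (𝔼 i, if p i then f i else 0) / (𝔼 i, if p i then 1 else 0) = 𝔼 i with p i, f i := by
  rcases isEmpty_or_nonempty α with _ | _
  · simp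
  have card_ne_zero : (Fintype.card α : K) ≠ 0 := Nat.cast_ne_zero.2 Fintype.card_ne_zero
  rw [Fintype.expect_eq_sum_div_card, Fintype.expect_eq_sum_div_card,
    div_div_div_cancel_right₀ card_ne_zero, sum_boole, ← sum_filter, expect_eq_sum_div_card]

theorem sum_mul_prod_eq_sum_mul_of_sum_eq_one {ι β A : Type*} [Fintype ι] [DecidableEq ι]
    [Fintype β] [CommSemiring A] (p : ι → β → A) (k : ι) (hp : ∀ j ≠ k, ∑ b, p j b = 1)
    (f : β → A) : ∑ R : ι → β, f (R k) * ∏ j, p j (R j) = ∑ b, f b * p k b := by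
  calc ∑ R : ι → β, f (R k) * ∏ j, p j (R j)
      = ∑ R : ι → β, ∏ j, (if j = k then f (R j) else 1) * p j (R j) := by
        simp only [prod_mul_distrib, prod_ite_eq', mem_univ, if_true]
    _ = ∏ j, ∑ b, (if j = k then f b else 1) * p j b := by rw [Fintype.prod_sum]
    _ = ∑ b, (if k = k then f b else 1) * p k b :=
        Fintype.prod_eq_single k fun j hj => by simp [hj, hp j hj]
    _ = ∑ b, f b * p k b := by simp

theorem exists_mem_powersetCard_univ_mem {ι : Type*} [Fintype ι] {t : ℕ} (ht : 0 < t)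
    (hcard : t ≤ Fintype.card ι) (k : ι) : ∃ T ∈ powersetCard t (univ : Finset ι), k ∈ T := by
  obtain ⟨T, hkT, -, hT⟩ := exists_subsuperset_card_eq (subset_univ {k}) (by simpa) hcard
  exact ⟨T, mem_powersetCard_univ.2 hT, hkT (mem_singleton_self k)⟩

theorem exists_mem_powersetCard_univ_notMem {ι : Type*} [Fintype ι] {t : ℕ}
    (hcard : t < Fintype.card ι) (k : ι) : ∃ T ∈ powersetCard t (univ : Finset ι), k ∉ T := by
  obtain ⟨T, hkT, hT⟩ : ∃ T ⊆ univ.erase k, #T = t :=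
    exists_subset_card_eq (by rw [card_erase_of_mem (mem_univ k), card_univ]; omega)
  exact ⟨T, mem_powersetCard_univ.2 hT, fun hk => notMem_erase k univ (hkT hk)⟩

/-- The conditional probability of the response `b` at a position occupied by the individual `i`,
given whether that position is treated: the factor contributed by one position to the weight `w`. -/
noncomputable def responseWeight {α : Type*} (τ ν : α → ℝ) (treated : Prop) [Decidable treated]
    (i : α) (b : Bool) : ℝ :=
  if b = true then (if treated then τ i else ν i) else 1 - (if treated then τ i else ν i)

theorem sum_responseWeight {α : Type*} (τ ν : α → ℝ) (treated : Prop) [Decidable treated] (i : α) :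
    ∑ b, responseWeight τ ν treated i b = 1 := by
  simp [responseWeight]

section Trial

variable {n s : ℕ} (t : ℕ) (τ ν : Fin n → ℝ)

theorem w_eq_ite (σ : Fin s ↪ Fin n) (T : Finset (Fin s)) (R : Fin s → Bool) :
    w n s t τ ν (σ, T, R) =
      if #T = t then (∏ j, responseWeight τ ν (j ∈ T) (σ j) (R j)) / s.choose t /
        Fintype.card (Fin s ↪ Fin n) else 0 := by
  unfold w responseWeight
  split_ifs <;> ring

theorem Pr_eq_expect (E : (Fin s ↪ Fin n) × Finset (Fin s) × (Fin s → Bool) → Prop) :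
    Pr n s t τ ν E = 𝔼 σ : Fin s ↪ Fin n, 𝔼 T ∈ powersetCard t univ, ∑ R : Fin s → Bool,
      if E (σ, T, R) then ∏ j, responseWeight τ ν (j ∈ T) (σ j) (R j) else 0 := by
  simp only [Pr, Fintype.sum_prod_type, Fintype.expect_eq_sum_div_card, sum_div]
  refine sum_congr rfl fun σ _ => ?_
  rw [expect_eq_sum_div_card, card_powersetCard, card_univ, Fintype.card_fin,
    ← univ_filter_card_eq, sum_filter, sum_div, sum_div]
  refine sum_congr rfl fun T _ => ?_
  by_cases hT : #T = t <;> simp [w_eq_ite, hT, sum_div, ite_div]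

theorem Pr_position_eq_expect (hsn : s ≤ n) (k : Fin s)
    (E : Fin n → Finset (Fin s) → Bool → Prop) :
    Pr n s t τ ν (fun ω => E (ω.1 k) ω.2.1 (ω.2.2 k)) =
      𝔼 i, 𝔼 T ∈ powersetCard t univ, ∑ b,
        if E i T b then responseWeight τ ν (k ∈ T) i b else 0 := by
  have : Nonempty (Fin s ↪ Fin n) := ⟨Fin.castLEEmb hsn⟩
  rw [Pr_eq_expect, ← expect_embedding_apply_s13 (α := Fin n) k]
  refine expect_congr rfl fun σ _ => expect_congr rfl fun T _ => ?_
  simpa only [ite_mul, one_mul, zero_mul] using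
    sum_mul_prod_eq_sum_mul_of_sum_eq_one (fun j => responseWeight τ ν (j ∈ T) (σ j)) k
      (fun j _ => sum_responseWeight τ ν (j ∈ T) (σ j)) (fun b => if E (σ k) T b then 1 else 0)

variable {t} (P : Finset (Fin s) → Prop) (Q : Fin n → Prop) [DecidablePred Q]

theorem Pr_assignment_and_position_eq_mul (hsn : s ≤ n) (k : Fin s) :
    Pr n s t τ ν (fun ω => P ω.2.1 ∧ Q (ω.1 k)) =
      (𝔼 T ∈ powersetCard t univ, if P T then 1 else 0) * 𝔼 i, if Q i then 1 else 0 := by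
  rw [Pr_position_eq_expect t τ ν hsn k fun i T _ => P T ∧ Q i, mul_expect]
  refine expect_congr rfl fun i _ => ?_
  rw [expect_mul]
  refine expect_congr rfl fun T _ => ?_
  by_cases hP : P T <;> by_cases hQ : Q i <;> simp [hP, hQ, responseWeight]

theorem Pr_response_and_assignment_and_position_eq_mul (hsn : s ≤ n) (k : Fin s) {q : Fin n → ℝ}
    (hq : ∀ T, P T → ∀ i, (if k ∈ T then τ i else ν i) = q i) :
    Pr n s t τ ν (fun ω => ω.2.2 k = true ∧ P ω.2.1 ∧ Q (ω.1 k)) =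
      (𝔼 T ∈ powersetCard t univ, if P T then 1 else 0) * 𝔼 i, if Q i then q i else 0 := by
  rw [Pr_position_eq_expect t τ ν hsn k fun i T b => b = true ∧ P T ∧ Q i, mul_expect]
  refine expect_congr rfl fun i _ => ?_
  rw [expect_mul]
  refine expect_congr rfl fun T _ => ?_
  by_cases hP : P T <;> by_cases hQ : Q i <;> simp [hP, hQ, responseWeight, ← hq T]

theorem cPr_response_eq_expect (hsn : s ≤ n) (k : Fin s)
    (hP : ∃ T ∈ powersetCard t univ, P T) {q : Fin n → ℝ}
    (hq : ∀ T, P T → ∀ i, (if k ∈ T then τ i else ν i) = q i) :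
    cPr n s t τ ν (fun ω => ω.2.2 k = true) (fun ω => P ω.2.1 ∧ Q (ω.1 k)) =
      𝔼 i with Q i, q i := by
  have assignment_ne_zero : (𝔼 T ∈ powersetCard t univ, if P T then (1 : ℝ) else 0) ≠ 0 := by
    obtain ⟨T, hT, hPT⟩ := hP
    exact (expect_pos' (fun T _ => by positivity) ⟨T, hT, by simp [hPT]⟩).ne'
  rw [cPr, Pr_response_and_assignment_and_position_eq_mul τ ν P Q hsn k hq,
    Pr_assignment_and_position_eq_mul τ ν P Q hsn k, mul_div_mul_left _ _ assignment_ne_zero,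
    expect_ite_div_expect_ite_one]

theorem cPr_response_treated_eq_expect (ht : 0 < t) (hts : t ≤ s) (hsn : s ≤ n) (k : Fin s) :
    cPr n s t τ ν (fun ω => ω.2.2 k = true) (fun ω => k ∈ ω.2.1 ∧ Q (ω.1 k)) =
      𝔼 i with Q i, τ i :=
  cPr_response_eq_expect τ ν (k ∈ ·) Q hsn k
    (exists_mem_powersetCard_univ_mem ht (by simpa) k) fun _ hk _ => if_pos hk

theorem cPr_response_untreated_eq_expect (hts : t < s) (hsn : s ≤ n) (k : Fin s) :
    cPr n s t τ ν (fun ω => ω.2.2 k = true) (fun ω => k ∉ ω.2.1 ∧ Q (ω.1 k)) =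
      𝔼 i with Q i, ν i :=
  cPr_response_eq_expect τ ν (k ∉ ·) Q hsn k
    (exists_mem_powersetCard_univ_notMem (by simpa) k) fun _ hk _ => if_neg hk

end Trial

theorem card_filter_eq_zero_eq_card_sub {α R : Type*} [Fintype α] [AddCommGroupWithOne R]
    (a : α → Fin 2) : (#{i | a i = 0} : R) = Fintype.card α - #{i | a i = 1} := by
  have compl : ({i | a i = 0} : Finset α) = ({i | ¬ a i = 1} : Finset α) :=
    filter_congr fun i _ => by omega
  rw [compl, eq_sub_iff_add_eq', ← Nat.cast_add, card_filter_add_card_filter_not, card_univ]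

/-- Conditional effect of treatment given `A_k = 0`:
`Pr(R_k = 1 | (T_k = 1) ∩ (A_k = 0)) − Pr(R_k = 1 | (T_k = 0) ∩ (A_k = 0))
  = (1/(n−|a|))·Σ_{i : a i = 0} (τ i − ν i)`. -/
theorem conditional_effect_attribute_zero (n s t : ℕ) (ht : 0 < t) (hts : t < s) (hsn : s ≤ n)
    (τ ν : Fin n → ℝ) (hτ : ∀ i, τ i ∈ Set.Icc (0 : ℝ) 1) (hν : ∀ i, ν i ∈ Set.Icc (0 : ℝ) 1)
    (a : Fin n → Fin 2) (ha : (univ.filter (fun i => a i = 1)).card < n) (k : Fin s) :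
    cPr n s t τ ν (fun ω => ω.2.2 k = true) (fun ω => k ∈ ω.2.1 ∧ a (ω.1 k) = 0) -
      cPr n s t τ ν (fun ω => ω.2.2 k = true) (fun ω => k ∉ ω.2.1 ∧ a (ω.1 k) = 0) =
      (1 / ((n : ℝ) - ((univ.filter (fun i => a i = 1)).card : ℝ))) *
        ∑ i ∈ univ.filter (fun i => a i = 0), (τ i - ν i) := by
  rw [cPr_response_treated_eq_expect τ ν (fun i => a i = 0) ht hts.le hsn k,
    cPr_response_untreated_eq_expect τ ν (fun i => a i = 0) hts hsn k, ← expect_sub_distrib,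
    expect_eq_sum_div_card, card_filter_eq_zero_eq_card_sub, Fintype.card_fin, one_div_mul_eq_div]

end RCT
end
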